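/- arXiv:1604.08639 — 2 statements merged into one kernel-verified Lean document; each statement's English description precedes it below -/
import Mathlib

section
/- Let R be a commutative ring with identity and let I be an ideal of R which is finite as a set. If the quotient ring R/I is a generalized Euclidean ring, then R is a generalized Euclidean ring. -/
/-- The set of `n × n` elementary matrices over `R`: matrices differing from the
identity by a single off-diagonal entry. -/
def ElemMatrices (n : ℕ) (R : Type*) [CommRing R] : Set (Matrix (Fin n) (Fin n) R) :=
  {M | ∃ (i j : Fin n) (c : R), i ≠ j ∧ M = Matrix.transvection i j c}

/-- `R` is a `GE_n`-ring: every matrix of determinant one is a product of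
elementary matrices, i.e. `SL_n(R) = E_n(R)`. -/
def IsGE (R : Type*) [CommRing R] (n : ℕ) : Prop :=
  ∀ A : Matrix (Fin n) (Fin n) R, A.det = 1 → A ∈ Submonoid.closure (ElemMatrices n R)

/-- `R` is a generalized Euclidean ring: a `GE_n`-ring for every `n ≥ 2`. -/
def IsGERing (R : Type*) [CommRing R] : Prop := ∀ n, 2 ≤ n → IsGE R n

/-!
Let `E_n(R)` be the monoid generated by the elementary matrices. Elementary matrices lift along
`R → R/I`, so multiplying by an element of `E_n(R)` reduces the theorem to matrices `A ≡ 1 mod I` of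
determinant one. These are treated by induction on the size, clearing the row and the column of a
diagonal entry once that entry is `1`.

The finiteness of `I` serves to create the entry `1`. The bottom row `(b, a)` of `A` is unimodular,
with `a ≡ 1` and `b ≡ 0` modulo `I`. As `1 + I` is finite, the powers of any `a ∈ 1 + I` repeat:
`a ^ m * (1 - a ^ p) = 0` with `p > 0`. If `c` is coprime to `a`, then `u = a + c * (1 - a ^ p)` is
coprime to both `a` and `1 - a ^ p`, hence to `0`, so `u` is a unit. Applied to a combination `c` of
the entries of `b`, this makes the corner a unit `u` by column operations; adding a multiple of the
last column to another one puts `1 - u` next to it, and a last operation gives the corner `1`.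
-/

open Matrix

section

variable {R S : Type*} [CommRing R] [CommRing S]

/-- Stable range one for an ideal `I` (the condition `sr I = 1` of Vaserstein): in every unimodular
pair `(a, b)` with `a ≡ 1` and `b ≡ 0` modulo `I`, adding some multiple of `b` to `a` gives a
unit. -/
def HasStableRangeOne (I : Ideal R) : Prop :=
  ∀ ⦃a b : R⦄, a - 1 ∈ I → b ∈ I → IsCoprime a b → ∃ y, IsUnit (a + b * y)

theorem isUnit_add_mul_one_sub_pow {a b : R} {m p : ℕ} (hab : IsCoprime a b) (hp : p ≠ 0)
    (ha : a ^ (m + p) = a ^ m) : IsUnit (a + b * (1 - a ^ p)) := by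
  have hap : IsCoprime a (1 - a ^ p) := by
    obtain ⟨q, rfl⟩ := Nat.exists_eq_succ_of_ne_zero hp
    exact ⟨a ^ q, 1, by rw [pow_succ]; ring⟩
  have h_left : IsCoprime (a + b * (1 - a ^ p)) (a ^ m) := by
    refine IsCoprime.pow_right (IsCoprime.symm ?_)
    simpa only [mul_one, add_comm] using (hab.mul_right hap).add_mul_left_right 1
  have h_right : IsCoprime (a + b * (1 - a ^ p)) (1 - a ^ p) := hap.add_mul_right_left b
  have h_zero : a ^ m * (1 - a ^ p) = 0 := by rw [mul_sub, ← pow_add, ha, mul_one, sub_self]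
  rw [← isCoprime_zero_right, ← h_zero]
  exact h_left.mul_right h_right

namespace HasStableRangeOne

variable {I : Ideal R}

theorem of_finite (hI : (I : Set R).Finite) : HasStableRangeOne I := by
  intro a b ha _ hab
  have h_pow_mem (k : ℕ) : a ^ k - 1 ∈ (I : Set R) :=
    I.mem_of_dvd (sub_one_dvd_pow_sub_one a k) ha
  obtain ⟨m, k, hmk, h_eq⟩ := Set.Finite.exists_lt_map_eq_of_forall_mem h_pow_mem hI
  have h_period : a ^ (m + (k - m)) = a ^ m := by
    rw [Nat.add_sub_cancel' hmk.le, sub_left_inj.1 h_eq]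
  exact ⟨_, isUnit_add_mul_one_sub_pow hab (Nat.sub_ne_zero_of_lt hmk) h_period⟩

/-- `y`, `w`, `z` are the coefficients of three successive column operations on the row `(b, a)`:
the first turns `a` into a unit `u`, the second turns some `b j` into `1 - u`, and the third adds
this entry to `u`. -/
theorem exists_add_dotProduct_eq_one {n : Type*} [Fintype n] [Nonempty n]
    (hI : HasStableRangeOne I) {a : R} {b s : n → R} (ha : a - 1 ∈ I) (hb : ∀ j, b j ∈ I)
    (h : IsCoprime a (b ⬝ᵥ s)) :
    ∃ y w z : n → R, (∀ j, w j ∈ I) ∧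
      (b + (b ⬝ᵥ y + a) • w) ⬝ᵥ z + (b ⬝ᵥ y + a) = 1 := by
  classical
  have h_dot_mem (v : n → R) : b ⬝ᵥ v ∈ I := I.sum_mem fun j _ ↦ I.mul_mem_right (v j) (hb j)
  obtain ⟨t, ht⟩ := hI ha (h_dot_mem s) h
  rw [mul_comm, ← smul_eq_mul, ← dotProduct_smul, add_comm] at ht
  set u := b ⬝ᵥ (t • s) + a
  obtain ⟨v, hv⟩ := ht.exists_right_inv
  have hu : 1 - u ∈ I := by
    rw [← neg_sub, add_sub_assoc]
    exact I.neg_mem (I.add_mem (h_dot_mem (t • s)) ha)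
  obtain ⟨j⟩ := ‹Nonempty n›
  set c := v * (1 - u - b j)
  have hc : c ∈ I := I.mul_mem_left v (I.sub_mem hu (hb j))
  refine ⟨t • s, Pi.single j c, Pi.single j 1, fun i ↦ ?_, ?_⟩
  · obtain rfl | hij := eq_or_ne i j
    · rwa [Pi.single_eq_same]
    · rw [Pi.single_eq_of_ne hij]
      exact I.zero_mem
  · rw [dotProduct_single_one, Pi.add_apply, Pi.smul_apply, Pi.single_eq_same, smul_eq_mul]
    linear_combination (1 - u - b j) * hv

end HasStableRangeOne

theorem fromBlocks_mul_upper_mul_lower_mul_upper {l m n o : Type*} [Fintype m] [DecidableEq m]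
    [Fintype n] [DecidableEq n] (A : Matrix l m R) (B : Matrix l n R) (C : Matrix o m R)
    (D : Matrix o n R) (Y Z : Matrix m n R) (W : Matrix n m R) :
    fromBlocks A B C D * (fromBlocks 1 Y 0 1 * fromBlocks 1 0 W 1 * fromBlocks 1 Z 0 1) =
      fromBlocks (A + (A * Y + B) * W) ((A + (A * Y + B) * W) * Z + (A * Y + B))
        (C + (C * Y + D) * W) ((C + (C * Y + D) * W) * Z + (C * Y + D)) := by
  rw [← Matrix.mul_assoc, ← Matrix.mul_assoc]
  simp only [fromBlocks_multiply, Matrix.mul_one, Matrix.mul_zero, add_zero, zero_add]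

/-- The monoid of products of elementary matrices indexed by an arbitrary finite type; for `Fin n`
it is the group `E_n(R)`. -/
def elementarySubmonoid (n R : Type*) [Fintype n] [DecidableEq n] [CommRing R] :
    Submonoid (Matrix n n R) :=
  Submonoid.closure (Set.range TransvectionStruct.toMatrix)

namespace elementarySubmonoid

variable {m n : Type*} [Fintype m] [DecidableEq m] [Fintype n] [DecidableEq n]

theorem fin_eq_closure_elemMatrices (k : ℕ) :
    elementarySubmonoid (Fin k) R = Submonoid.closure (ElemMatrices k R) := by
  refine congrArg Submonoid.closure (Set.Subset.antisymm ?_ ?_)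
  · rintro _ ⟨t, rfl⟩
    exact ⟨t.i, t.j, t.c, t.hij, rfl⟩
  · rintro _ ⟨i, j, c, hij, rfl⟩
    exact ⟨⟨i, j, hij, c⟩, rfl⟩

theorem toMatrix_mem (t : TransvectionStruct n R) : t.toMatrix ∈ elementarySubmonoid n R :=
  Submonoid.subset_closure ⟨t, rfl⟩

theorem det_eq_one {P : Matrix n n R} (hP : P ∈ elementarySubmonoid n R) : P.det = 1 := by
  induction hP using Submonoid.closure_induction with
  | mem _ h => obtain ⟨t, rfl⟩ := h; exact t.det
  | one => exact det_one
  | mul P Q _ _ hP hQ => rw [det_mul, hP, hQ, one_mul]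

theorem inv_mem {P : Matrix n n R} (hP : P ∈ elementarySubmonoid n R) :
    P⁻¹ ∈ elementarySubmonoid n R := by
  induction hP using Submonoid.closure_induction with
  | mem _ h =>
    obtain ⟨t, rfl⟩ := h
    rw [inv_eq_right_inv t.mul_inv]
    exact toMatrix_mem t.inv
  | one => rw [inv_one]; exact one_mem _
  | mul P Q _ _ hP hQ => rw [Matrix.mul_inv_rev]; exact mul_mem hQ hP

theorem mul_inv_cancel {P : Matrix n n R} (hP : P ∈ elementarySubmonoid n R) : P * P⁻¹ = 1 :=
  mul_nonsing_inv P (by rw [det_eq_one hP]; exact isUnit_one)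

theorem mem_of_mul_mem {A P : Matrix n n R} (hP : P ∈ elementarySubmonoid n R)
    (h : A * P ∈ elementarySubmonoid n R) : A ∈ elementarySubmonoid n R := by
  simpa only [mul_assoc, mul_inv_cancel hP, mul_one] using mul_mem h (inv_mem hP)

theorem exists_mapMatrix_eq {f : R →+* S} (hf : Function.Surjective f) {M : Matrix n n S}
    (hM : M ∈ elementarySubmonoid n S) :
    ∃ P ∈ elementarySubmonoid n R, f.mapMatrix P = M := by
  induction hM using Submonoid.closure_induction with
  | mem _ h =>
    obtain ⟨⟨i, j, hij, c⟩, rfl⟩ := h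
    obtain ⟨c, rfl⟩ := hf c
    exact ⟨_, toMatrix_mem ⟨i, j, hij, c⟩, by simp [transvection, Matrix.map_add]⟩
  | one => exact ⟨1, one_mem _, map_one _⟩
  | mul _ _ _ _ hP hQ =>
    obtain ⟨P, hP, rfl⟩ := hP
    obtain ⟨Q, hQ, rfl⟩ := hQ
    exact ⟨P * Q, mul_mem hP hQ, map_mul _ _ _⟩

theorem reindex_mem (e : m ≃ n) {A : Matrix m m R} (hA : A ∈ elementarySubmonoid m R) :
    reindex e e A ∈ elementarySubmonoid n R := by
  rw [← coe_reindexAlgEquiv R R]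
  induction hA using Submonoid.closure_induction with
  | mem _ h =>
    obtain ⟨t, rfl⟩ := h
    rw [← t.toMatrix_reindexEquiv]
    exact toMatrix_mem _
  | one => rw [map_one]; exact one_mem _
  | mul _ _ _ _ hP hQ => rw [map_mul]; exact mul_mem hP hQ

theorem fromBlocks_diagonal_one_mem {A : Matrix m m R} (hA : A ∈ elementarySubmonoid m R) :
    fromBlocks A 0 0 1 ∈ elementarySubmonoid (m ⊕ n) R := by
  induction hA using Submonoid.closure_induction with
  | mem _ h =>
    obtain ⟨t, rfl⟩ := h
    rw [← t.toMatrix_sumInl n]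
    exact toMatrix_mem (t.sumInl n)
  | one => rw [fromBlocks_one]; exact one_mem _
  | mul P Q _ _ hP hQ => simpa [fromBlocks_multiply] using mul_mem hP hQ

theorem fromBlocks_upper_mem (B : Matrix m n R) :
    fromBlocks 1 B 0 1 ∈ elementarySubmonoid (m ⊕ n) R := by
  induction B using Matrix.induction_on' with
  | h_zero => rw [fromBlocks_one]; exact one_mem _
  | h_add B C hB hC => simpa [fromBlocks_multiply, add_comm] using mul_mem hB hC
  | h_std_basis i j c =>
    convert toMatrix_mem ⟨Sum.inl i, Sum.inr j, Sum.inl_ne_inr, c⟩ using 1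
    rw [TransvectionStruct.toMatrix_mk, transvection, ← fromBlocks_one]
    ext (_ | _) (_ | _) <;> simp [single, one_apply]

theorem fromBlocks_lower_mem (C : Matrix n m R) :
    fromBlocks 1 0 C 1 ∈ elementarySubmonoid (m ⊕ n) R := by
  simpa using reindex_mem (Equiv.sumComm n m) (fromBlocks_upper_mem C)

theorem fromBlocks_one₂₂_mem {A : Matrix m m R} {B : Matrix m n R} {C : Matrix n m R}
    (h : A - B * C ∈ elementarySubmonoid m R) :
    fromBlocks A B C 1 ∈ elementarySubmonoid (m ⊕ n) R := by
  have h_factor : fromBlocks A B C 1 =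
      fromBlocks 1 B 0 1 * fromBlocks (A - B * C) 0 0 1 * fromBlocks 1 0 C 1 := by
    simp [fromBlocks_multiply]
  rw [h_factor]
  exact mul_mem (mul_mem (fromBlocks_upper_mem B) (fromBlocks_diagonal_one_mem h))
    (fromBlocks_lower_mem C)

theorem exists_isCoprime_dotProduct {A : Matrix (n ⊕ Fin 1) (n ⊕ Fin 1) R} (hA : A.det = 1) :
    ∃ s, IsCoprime (A.toBlocks₂₂ 0 0) (A.toBlocks₂₁ 0 ⬝ᵥ s) := by
  have h_row : (A * A.adjugate) (Sum.inr 0) (Sum.inr 0) = 1 := by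
    rw [mul_adjugate, hA, one_smul, one_apply_eq]
  rw [mul_apply, Fintype.sum_sum_type, Fin.sum_univ_one] at h_row
  refine ⟨fun j ↦ A.adjugate (Sum.inl j) (Sum.inr 0), A.adjugate (Sum.inr 0) (Sum.inr 0), 1, ?_⟩
  rw [one_mul, mul_comm, add_comm]
  exact h_row

theorem exists_mul_eq_fromBlocks_one₂₂ [Nonempty n] {f : R →+* S}
    (hf : HasStableRangeOne (RingHom.ker f)) {M : Matrix (n ⊕ Fin 1) (n ⊕ Fin 1) R}
    (hdet : M.det = 1) (hM : M.map f = 1) :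
    ∃ P ∈ elementarySubmonoid (n ⊕ Fin 1) R, ∃ A B C,
      M * P = fromBlocks A B C 1 ∧ A.map f = 1 ∧ C.map f = 0 := by
  obtain ⟨s, hs⟩ := exists_isCoprime_dotProduct hdet
  obtain ⟨A, B, C, D, rfl⟩ : ∃ A B C D, M = fromBlocks A B C D :=
    ⟨_, _, _, _, (fromBlocks_toBlocks M).symm⟩
  rw [toBlocks_fromBlocks₂₂, toBlocks_fromBlocks₂₁] at hs
  rw [fromBlocks_map, ← fromBlocks_one, fromBlocks_inj] at hM
  obtain ⟨hA, -, hC, hD⟩ := hM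
  have hD_mem : D 0 0 - 1 ∈ RingHom.ker f := by
    rw [RingHom.mem_ker, map_sub, map_one, sub_eq_zero]
    exact congr_fun₂ hD 0 0
  obtain ⟨y, w, z, hw, h_corner⟩ :=
    hf.exists_add_dotProduct_eq_one hD_mem (fun j ↦ congr_fun₂ hC 0 j) hs
  set Y := replicateCol (Fin 1) y
  set W := replicateRow (Fin 1) w
  set Z := replicateCol (Fin 1) z
  have hW : W.map f = 0 := by ext _ j; exact hw j
  have h_row : (C + (C * Y + D) * W) 0 = C 0 + (C 0 ⬝ᵥ y + D 0 0) • w := by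
    ext j
    simp [W, Y, mul_apply, dotProduct]
  have h_one : (C + (C * Y + D) * W) * Z + (C * Y + D) = 1 := by
    ext i j
    rw [Fin.fin_one_eq_zero i, Fin.fin_one_eq_zero j, one_apply_eq, ← h_corner, ← h_row]
    rfl
  refine ⟨_, mul_mem (mul_mem (fromBlocks_upper_mem Y) (fromBlocks_lower_mem W))
    (fromBlocks_upper_mem Z), _, _, _,
    (fromBlocks_mul_upper_mul_lower_mul_upper ..).trans (by rw [h_one]), ?_, ?_⟩
  · simp [Matrix.map_add, Matrix.map_mul, hA, hW]
  · simp [Matrix.map_add, Matrix.map_mul, hC, hW]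

theorem mem_of_subsingleton [Subsingleton n] {A : Matrix n n R} (hA : A.det = 1) :
    A ∈ elementarySubmonoid n R := by
  have h_one : A = 1 := by
    ext i j
    rw [Subsingleton.elim j i, one_apply_eq, ← det_eq_elem_of_subsingleton A i, hA]
  rw [h_one]
  exact one_mem _

theorem mem_of_map_eq_one {f : R →+* S} (hf : HasStableRangeOne (RingHom.ker f)) {n : ℕ}
    {A : Matrix (Fin n) (Fin n) R} (hdet : A.det = 1) (hA : A.map f = 1) :
    A ∈ elementarySubmonoid (Fin n) R := by
  induction n using Nat.twoStepInduction with
  | zero => exact mem_of_subsingleton hdet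
  | one => exact mem_of_subsingleton hdet
  | more n _ ih =>
    let e : Fin (n + 1) ⊕ Fin 1 ≃ Fin (n + 2) := finSumFinEquiv
    obtain ⟨A, rfl⟩ := (reindex e e).surjective A
    rw [det_reindex_self] at hdet
    replace hA : A.map f = 1 :=
      (reindex e e).injective (hA.trans (submatrix_one_equiv e.symm).symm)
    obtain ⟨P, hP, A₁, B, C, hAP, hA₁, hC⟩ := exists_mul_eq_fromBlocks_one₂₂ hf hdet hA
    refine reindex_mem _ (mem_of_mul_mem hP ?_)
    rw [hAP]
    refine fromBlocks_one₂₂_mem (ih ?_ ?_)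
    · rw [← det_fromBlocks_one₂₂, ← hAP, det_mul, hdet, det_eq_one hP, one_mul]
    · simp [Matrix.map_sub, Matrix.map_mul, hA₁, hC]

end elementarySubmonoid

open elementarySubmonoid

theorem stmt_6_general {f : R →+* S} (hf : Function.Surjective f)
    (hker : HasStableRangeOne (RingHom.ker f)) {n : ℕ} (hGE : IsGE S n) : IsGE R n := by
  intro A hA
  have hdet : (f.mapMatrix A).det = 1 := by rw [← RingHom.map_det, hA, map_one]
  obtain ⟨P, hP, hPA⟩ := exists_mapMatrix_eq hf
    ((fin_eq_closure_elemMatrices n).ge (hGE _ hdet))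
  rw [← fin_eq_closure_elemMatrices]
  refine mem_of_mul_mem (inv_mem hP) (mem_of_map_eq_one hker ?_ ?_)
  · rw [det_mul, hA, det_eq_one (inv_mem hP), one_mul]
  · rw [← RingHom.mapMatrix_apply, map_mul, ← hPA, ← map_mul, mul_inv_cancel hP, map_one]

end

/-- If `I` is a finite ideal of `R` and `R/I` is a generalized Euclidean ring,
then so is `R`. -/
theorem stmt_6 (R : Type*) [CommRing R] (I : Ideal R)
    (hfin : (I : Set R).Finite) (hGE : IsGERing (R ⧸ I)) :
    IsGERing R := fun n hn ↦
  stmt_6_general Ideal.Quotient.mk_surjective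
    (HasStableRangeOne.of_finite (by rwa [Ideal.mk_ker])) (hGE n hn)
end

section
/- Let D be a finite set of positive integers with at least two elements, let e ∈ D with e ∈ {1, 2}, and set η_e = ∏_{d ∈ D \ {e}} Φ_d(ζ_e) ∈ ℤ[ζ_e] = ℤ (here ζ_1 = 1 and ζ_2 = −1). If η_e = ±3 and O(D \ {e}) is a GE_2-ring, then O(D) is a GE_2-ring. -/
/-- The primitive `e`-th root of unity `ζ_e = e^{2πi/e}`. -/
noncomputable def zeta (e : ℕ) : ℂ := Complex.exp (2 * Real.pi * Complex.I / e)

/-- The subring `ℤ[ζ_e]` of `ℂ`. -/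
noncomputable def Zzeta (e : ℕ) : Subalgebra ℤ ℂ := Algebra.adjoin ℤ {zeta e}

/-- `ζ_e` as an element of `ℤ[ζ_e]`. -/
noncomputable def zetaEl (e : ℕ) : Zzeta e :=
  ⟨zeta e, Algebra.self_mem_adjoin_singleton ℤ _⟩

/-- `η_e = ∏_{d ∈ D \ {e}} Φ_d(ζ_e)` as an element of `ℤ[ζ_e]`. -/
noncomputable def eta (D : Finset ℕ) (e : ℕ) : Zzeta e :=
  ∏ d ∈ D.erase e, Polynomial.aeval (zetaEl e) (Polynomial.cyclotomic d ℤ)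

/-!
Put `R = O(D)` and `S = O(D \ {e})`. Evaluation at `ζ_e = ±1` and reduction embed `R` in `ℤ × S`,
and evaluation maps the kernel of `R → S` onto the ideal `η_e ℤ = 3ℤ`. Given `A ∈ SL₂(R)`,
elementary matrices lift along `R → S`, so `A` may be multiplied by an element of `E₂(R)` until its
image in `SL₂(S)` is trivial; its image in `SL₂(ℤ)` then lies in `Γ(3)`. The arithmetic input is
that `Γ(3)` is the relative elementary subgroup `E₂(ℤ, 3ℤ)`, by descent on the first column with
the parabolic matrices at the four cusps `∞`, `0`, `1`, `-1` of `Γ(3)`. Generators of `E₂(ℤ, 3ℤ)`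
lift to elements of `E₂(R)` that are trivial over `S`, so `A ∈ E₂(R)`.
-/

section Subgroups

open Matrix Matrix.SpecialLinearGroup

variable (ι : Type*) [Fintype ι] [DecidableEq ι] {R S : Type*} [CommRing R] [CommRing S]

/-- The elementary subgroup `E_n(R)` of `SL_n(R)`. -/
def elementarySubgroup (R : Type*) [CommRing R] : Subgroup (SpecialLinearGroup ι R) :=
  Subgroup.closure (Set.range TransvectionStruct.toSpecialLinearGroup)

/-- The relative elementary subgroup `E_n(R, I)`: the normal closure in `E_n(R)` of the elementary
matrices with off-diagonal entry in `I`. It is generated here by the conjugates themselves, so that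
it is a subgroup of `SL_n(R)`. -/
def relElementarySubgroup (I : Ideal R) : Subgroup (SpecialLinearGroup ι R) :=
  Subgroup.closure {A | ∃ P ∈ elementarySubgroup ι R, ∃ (i j : ι) (hij : i ≠ j), ∃ c ∈ I,
    A = P * transvection hij c * P⁻¹}

/-- The principal congruence subgroup of level `I` in `SL_n(R)`; for the ideal `Nℤ` and `n = 2` it
is `CongruenceSubgroup.Gamma N`. -/
def principalCongruenceSubgroup (I : Ideal R) : Subgroup (SpecialLinearGroup ι R) :=
  (SpecialLinearGroup.map (Ideal.Quotient.mk I)).ker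

variable {ι}

lemma transvection_mem_elementarySubgroup {i j : ι} (hij : i ≠ j) (c : R) :
    transvection hij c ∈ elementarySubgroup ι R :=
  Subgroup.subset_closure ⟨⟨i, j, hij, c⟩, rfl⟩

lemma conj_transvection_mem_relElementarySubgroup {I : Ideal R} {P : SpecialLinearGroup ι R}
    (hP : P ∈ elementarySubgroup ι R) {i j : ι} (hij : i ≠ j) {c : R} (hc : c ∈ I) :
    P * transvection hij c * P⁻¹ ∈ relElementarySubgroup ι I :=
  Subgroup.subset_closure ⟨P, hP, i, j, hij, c, hc, rfl⟩

lemma transvection_mem_relElementarySubgroup {I : Ideal R} {i j : ι} (hij : i ≠ j) {c : R}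
    (hc : c ∈ I) : transvection hij c ∈ relElementarySubgroup ι I := by
  simpa using conj_transvection_mem_relElementarySubgroup (one_mem _) hij hc

lemma relElementarySubgroup_le_elementarySubgroup (I : Ideal R) :
    relElementarySubgroup ι I ≤ elementarySubgroup ι R := by
  rw [relElementarySubgroup, Subgroup.closure_le]
  rintro _ ⟨P, hP, i, j, hij, c, -, rfl⟩
  exact mul_mem (mul_mem hP (transvection_mem_elementarySubgroup hij c)) (inv_mem hP)

lemma map_transvection (f : R →+* S) {i j : ι} (hij : i ≠ j) (c : R) :
    SpecialLinearGroup.map f (transvection hij c) = transvection hij (f c) :=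
  Subtype.ext <| by simp [transvection_coe, Matrix.map_add]

lemma map_eq_one_iff_forall_mem_ker {f : R →+* S} {A : SpecialLinearGroup ι R} :
    SpecialLinearGroup.map f A = 1 ↔ ∀ i j, A i j - (1 : Matrix ι ι R) i j ∈ RingHom.ker f := by
  simp [Matrix.SpecialLinearGroup.ext_iff, RingHom.mem_ker, sub_eq_zero, one_apply, apply_ite f]

lemma mem_principalCongruenceSubgroup {I : Ideal R} {A : SpecialLinearGroup ι R} :
    A ∈ principalCongruenceSubgroup ι I ↔ ∀ i j, A i j - (1 : Matrix ι ι R) i j ∈ I := by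
  rw [principalCongruenceSubgroup, MonoidHom.mem_ker, map_eq_one_iff_forall_mem_ker,
    Ideal.mk_ker]

lemma ker_map_eq_principalCongruenceSubgroup (f : R →+* S) :
    (SpecialLinearGroup.map f).ker = principalCongruenceSubgroup ι (RingHom.ker f) := by
  ext A
  rw [MonoidHom.mem_ker, map_eq_one_iff_forall_mem_ker, mem_principalCongruenceSubgroup]

lemma map_mem_principalCongruenceSubgroup (f : R →+* S) {I : Ideal R} {A : SpecialLinearGroup ι R}
    (hA : A ∈ principalCongruenceSubgroup ι I) :
    SpecialLinearGroup.map f A ∈ principalCongruenceSubgroup ι (I.map f) := by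
  rw [mem_principalCongruenceSubgroup] at hA ⊢
  intro i j
  simpa [Matrix.one_apply, apply_ite f] using Ideal.mem_map_of_mem f (hA i j)

lemma relElementarySubgroup_le_principalCongruenceSubgroup (I : Ideal R) :
    relElementarySubgroup ι I ≤ principalCongruenceSubgroup ι I := by
  rw [relElementarySubgroup, Subgroup.closure_le]
  rintro _ ⟨P, -, i, j, hij, c, hc, rfl⟩
  simp [principalCongruenceSubgroup, MonoidHom.mem_ker, map_transvection,
    Ideal.Quotient.eq_zero_iff_mem.2 hc]

lemma map_elementarySubgroup {f : R →+* S} (hf : Function.Surjective f) :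
    (elementarySubgroup ι R).map (SpecialLinearGroup.map f) = elementarySubgroup ι S := by
  rw [elementarySubgroup, elementarySubgroup, MonoidHom.map_closure, ← Set.range_comp]
  congr 1
  ext A
  constructor
  · rintro ⟨⟨i, j, hij, c⟩, rfl⟩
    exact ⟨⟨i, j, hij, f c⟩, (map_transvection f hij c).symm⟩
  · rintro ⟨⟨i, j, hij, c⟩, rfl⟩
    obtain ⟨c, rfl⟩ := hf c
    exact ⟨⟨i, j, hij, c⟩, map_transvection f hij c⟩

lemma relElementarySubgroup_map_le {f : R →+* S} (hf : Function.Surjective f) (I : Ideal R) :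
    relElementarySubgroup ι (I.map f) ≤
      (relElementarySubgroup ι I).map (SpecialLinearGroup.map f) := by
  rw [relElementarySubgroup, Subgroup.closure_le]
  rintro _ ⟨Q, hQ, i, j, hij, c, hc, rfl⟩
  obtain ⟨P, hP, rfl⟩ := (map_elementarySubgroup hf).ge hQ
  obtain ⟨b, hb, rfl⟩ := (Ideal.mem_map_iff_of_surjective f hf).1 hc
  exact ⟨_, conj_transvection_mem_relElementarySubgroup hP hij hb, by simp [map_transvection]⟩

lemma closure_elemMatrices (n : ℕ) (R : Type*) [CommRing R] :
    Submonoid.closure (ElemMatrices n R) =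
      (elementarySubgroup (Fin n) R).toSubmonoid.map coeMonoidHom := by
  set s : Set (SpecialLinearGroup (Fin n) R) := Set.range TransvectionStruct.toSpecialLinearGroup
  have inv_subset : s⁻¹ ⊆ s := by
    rintro A ⟨⟨i, j, hij, c⟩, hA⟩
    exact ⟨⟨i, j, hij, -c⟩, by
      rw [← inv_inv A, ← hA]; exact (transvection_inv hij c).symm⟩
  rw [elementarySubgroup, Subgroup.closure_toSubmonoid, Set.union_eq_left.2 inv_subset,
    MonoidHom.map_mclosure, ← Set.range_comp]
  congr 1
  ext M
  constructor
  · rintro ⟨i, j, c, hij, rfl⟩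
    exact ⟨⟨i, j, hij, c⟩, rfl⟩
  · rintro ⟨⟨i, j, hij, c⟩, rfl⟩
    exact ⟨i, j, c, hij, rfl⟩

lemma isGE_iff_elementarySubgroup_eq_top {n : ℕ} :
    IsGE R n ↔ elementarySubgroup (Fin n) R = ⊤ := by
  simp_rw [IsGE, closure_elemMatrices, Subgroup.eq_top_iff']
  constructor
  · intro h A
    obtain ⟨B, hB, hBA⟩ := h A A.2
    rwa [← coeMonoidHom_injective hBA]
  · exact fun h A hA ↦ ⟨⟨A, hA⟩, h _, rfl⟩

end Subgroups

section FibreProducts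

open Matrix Matrix.SpecialLinearGroup

variable {R S B C : Type*} [CommRing R] [CommRing S] [CommRing B] [CommRing C] {n : ℕ}

theorem IsGE.of_ker_inf_ker_eq_bot {f : R →+* C} {g : R →+* S} (hf : Function.Surjective f)
    (hg : Function.Surjective g) (hfg : RingHom.ker f ⊓ RingHom.ker g = ⊥)
    (hΓ : principalCongruenceSubgroup (Fin n) ((RingHom.ker g).map f) ≤
      relElementarySubgroup (Fin n) ((RingHom.ker g).map f))
    (hS : IsGE S n) : IsGE R n := by
  rw [isGE_iff_elementarySubgroup_eq_top] at hS ⊢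
  refine (Subgroup.eq_top_iff' _).2 fun A ↦ ?_
  obtain ⟨U, hU, hUA⟩ : SpecialLinearGroup.map g A ∈
      (elementarySubgroup (Fin n) R).map (SpecialLinearGroup.map g) := by
    rw [map_elementarySubgroup hg, hS]
    exact Subgroup.mem_top _
  have hker : U⁻¹ * A ∈ principalCongruenceSubgroup (Fin n) (RingHom.ker g) := by
    rw [← ker_map_eq_principalCongruenceSubgroup, MonoidHom.mem_ker, map_mul, map_inv,
      hUA, inv_mul_cancel]
  obtain ⟨V, hV, hVA⟩ := relElementarySubgroup_map_le hf _
    (hΓ (map_mem_principalCongruenceSubgroup f hker))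
  have hker_g : V⁻¹ * (U⁻¹ * A) ∈ principalCongruenceSubgroup (Fin n) (RingHom.ker g) :=
    mul_mem (inv_mem (relElementarySubgroup_le_principalCongruenceSubgroup _ hV)) hker
  have hker_f : V⁻¹ * (U⁻¹ * A) ∈ principalCongruenceSubgroup (Fin n) (RingHom.ker f) := by
    rw [← ker_map_eq_principalCongruenceSubgroup, MonoidHom.mem_ker, map_mul, map_inv,
      hVA, inv_mul_cancel]
  have hVUA : V⁻¹ * (U⁻¹ * A) = 1 := by
    ext i j
    rw [mem_principalCongruenceSubgroup] at hker_f hker_g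
    exact sub_eq_zero.1 (hfg.le ⟨hker_f i j, hker_g i j⟩)
  rw [show A = U * V by simpa [inv_mul_eq_iff_eq_mul] using hVUA]
  exact mul_mem hU (relElementarySubgroup_le_elementarySubgroup _ hV)

theorem IsGE.quotient_ker_inf {φ : B →+* C} (hφ : Function.Surjective φ) {J : Ideal B}
    (hΓ : principalCongruenceSubgroup (Fin n) (J.map φ) ≤ relElementarySubgroup (Fin n) (J.map φ))
    (hJ : IsGE (B ⧸ J) n) : IsGE (B ⧸ RingHom.ker φ ⊓ J) n := by
  let f : B ⧸ RingHom.ker φ ⊓ J →+* C := Ideal.Quotient.lift _ φ fun _ hb ↦ hb.1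
  let g : B ⧸ RingHom.ker φ ⊓ J →+* B ⧸ J := Ideal.Quotient.factor inf_le_right
  have map_ker_g : (RingHom.ker g).map f = J.map φ := by
    have lift_comp_mk : f.comp (Ideal.Quotient.mk _) = φ := RingHom.ext fun _ ↦ rfl
    rw [Ideal.Quotient.factor_ker, Ideal.map_map, lift_comp_mk]
  refine IsGE.of_ker_inf_ker_eq_bot (f := f) (g := g)
    (Ideal.Quotient.lift_surjective_of_surjective _ _ hφ)
    (Ideal.Quotient.factor_surjective _) ?_ (by rwa [map_ker_g]) hJ
  refine eq_bot_iff.2 fun r ⟨hfr, hgr⟩ ↦ ?_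
  obtain ⟨b, rfl⟩ := Ideal.Quotient.mk_surjective r
  exact Ideal.Quotient.eq_zero_iff_mem.2 ⟨hfr, Ideal.Quotient.eq_zero_iff_mem.1 hgr⟩

end FibreProducts

section Gamma

open Matrix Matrix.SpecialLinearGroup MatrixGroups

lemma transvection_smul {ι R : Type*} [Fintype ι] [DecidableEq ι] [CommRing R] {i j : ι}
    (hij : i ≠ j) (c : R) (v : ι → R) :
    transvection hij c • v = v + (c * v j) • Pi.single i 1 := by
  simp [Matrix.SpecialLinearGroup.smul_def, transvection_coe, add_smul, single_mulVec_eq, mul_smul]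

lemma isGE_two_int : IsGE ℤ 2 := by
  rw [isGE_iff_elementarySubgroup_eq_top, eq_top_iff, ← SpecialLinearGroup.SL2Z_generators,
    Subgroup.closure_le]
  have upper (c : ℤ) := transvection_mem_elementarySubgroup (zero_ne_one' (Fin 2)) c
  have lower (c : ℤ) := transvection_mem_elementarySubgroup (zero_ne_one' (Fin 2)).symm c
  have hS : ModularGroup.S = transvection (zero_ne_one' (Fin 2)) (-1) *
      transvection (zero_ne_one' (Fin 2)).symm 1 * transvection (zero_ne_one' (Fin 2)) (-1) := by
    decide
  have hT : ModularGroup.T = transvection (zero_ne_one' (Fin 2)) 1 := by decide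
  rintro _ (rfl | rfl)
  · exact hS ▸ mul_mem (mul_mem (upper _) (lower _)) (upper _)
  · exact hT ▸ upper 1

/-- Over `ℤ`, the matrix `g` is parabolic and fixes the cusp `u 0 / u 1`. -/
lemma exists_mem_relElementarySubgroup_smul_eq {R : Type*} [CommRing R] (hR : IsGE R 2)
    {I : Ideal R} {t : R} (ht : t ∈ I) {u : Fin 2 → R} (hu : IsCoprime (u 0) (u 1)) :
    ∃ g ∈ relElementarySubgroup (Fin 2) I, ∀ v : Fin 2 → R,
      g • v = v + (t * (u 0 * v 1 - u 1 * v 0)) • u := by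
  obtain ⟨P, hP₀, hP₁⟩ := hu.exists_SL2_col 0
  have hP : P ∈ elementarySubgroup (Fin 2) R := by
    rw [isGE_iff_elementarySubgroup_eq_top.1 hR]
    exact Subgroup.mem_top P
  have smul_single : P • (Pi.single 0 1 : Fin 2 → R) = u := by
    ext i; fin_cases i <;> simp [Matrix.SpecialLinearGroup.smul_def, hP₀, hP₁]
  refine ⟨P * transvection (zero_ne_one' (Fin 2)) t * P⁻¹,
    conj_transvection_mem_relElementarySubgroup hP _ ht, fun v ↦ ?_⟩
  have inv_smul_one : (P⁻¹ • v) 1 = u 0 * v 1 - u 1 * v 0 := by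
    simp only [Matrix.SpecialLinearGroup.smul_def, coe_inv, adjugate_fin_two, smul_eq_mulVec,
      mulVec, vec2_dotProduct, of_apply, cons_val_zero, cons_val_one, hP₀, hP₁]
    ring
  rw [mul_smul, mul_smul, transvection_smul, smul_add, smul_inv_smul, smul_comm, smul_single,
    inv_smul_one]

/-- Unless `|a|` and `|c|` are within a factor `3/2` of each other, `u = (1, 0)` or `u = (0, 1)`
works; otherwise `u = (1, 1)` or `u = (1, -1)` does. The congruences exclude `a = ±c`. -/
lemma exists_natAbs_add_natAbs_lt {a c : ℤ} (ha : 3 ∣ a - 1) (hc : 3 ∣ c) (hc0 : c ≠ 0) :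
    ∃ (u : Fin 2 → ℤ) (s : ℤ), IsCoprime (u 0) (u 1) ∧
      (a + 3 * s * (u 0 * c - u 1 * a) * u 0).natAbs +
        (c + 3 * s * (u 0 * c - u 1 * a) * u 1).natAbs < a.natAbs + c.natAbs := by
  suffices ∃ x y : ℤ, IsCoprime x y ∧ ∃ s ∈ ({1, -1} : Set ℤ),
      (a + 3 * s * (x * c - y * a) * x).natAbs + (c + 3 * s * (x * c - y * a) * y).natAbs <
        a.natAbs + c.natAbs by
    obtain ⟨x, y, hxy, s, -, h⟩ := this
    exact ⟨![x, y], s, hxy, h⟩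
  simp only [Set.mem_insert_iff, Set.mem_singleton_iff, exists_eq_or_imp, exists_eq_left]
  rcases lt_or_ge (3 * c.natAbs) (2 * a.natAbs) with hca | hca
  · exact ⟨1, 0, isCoprime_one_left, by omega⟩
  rcases lt_or_ge (3 * a.natAbs) (2 * c.natAbs) with hac | hac
  · exact ⟨0, 1, isCoprime_one_right, by omega⟩
  by_cases same_sign : 0 < a ↔ 0 < c
  · exact ⟨1, 1, isCoprime_one_left, by omega⟩
  · exact ⟨1, -1, isCoprime_one_left, by omega⟩

lemma eq_transvection_of_apply_zero_zero_eq_one {R : Type*} [CommRing R] {A : SL(2, R)}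
    (ha : A 0 0 = 1) (hc : A 1 0 = 0) : A = transvection (zero_ne_one' (Fin 2)) (A 0 1) := by
  have hd : A 1 1 = 1 := by
    simpa only [det_fin_two, ha, hc, one_mul, mul_zero, sub_zero] using A.det_coe
  ext i j
  fin_cases i <;> fin_cases j <;> simp [transvection_coe, ha, hc, hd]

theorem principalCongruenceSubgroup_span_three_le :
    principalCongruenceSubgroup (Fin 2) (Ideal.span {(3 : ℤ)}) ≤
      relElementarySubgroup (Fin 2) (Ideal.span {(3 : ℤ)}) := by
  intro A hA
  induction hsize : (A 0 0).natAbs + (A 1 0).natAbs using Nat.strong_induction_on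
    generalizing A with
  | _ size ih =>
    subst hsize
    have hmod := mem_principalCongruenceSubgroup.1 hA
    simp only [Ideal.mem_span_singleton] at hmod
    have ha : 3 ∣ A 0 0 - 1 := hmod 0 0
    by_cases hc : A 1 0 = 0
    · have isUnit_corner : IsUnit (A 0 0) := isCoprime_zero_right.1 (hc ▸ isCoprime_col A 0)
      have corner_eq_one : A 0 0 = 1 := by
        obtain h | h := Int.isUnit_iff.1 isUnit_corner <;> omega
      rw [eq_transvection_of_apply_zero_zero_eq_one corner_eq_one hc]
      exact transvection_mem_relElementarySubgroup _
        (Ideal.mem_span_singleton.2 (by simpa using hmod 0 1))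
    · obtain ⟨u, s, hu, hlt⟩ := exists_natAbs_add_natAbs_lt ha (by simpa using hmod 1 0) hc
      obtain ⟨g, hg, hgv⟩ := exists_mem_relElementarySubgroup_smul_eq isGE_two_int
        (Ideal.mem_span_singleton.2 (dvd_mul_right 3 s)) hu
      have hcol (i : Fin 2) : (g * A) i 0 = A i 0 + 3 * s * (u 0 * A 1 0 - u 1 * A 0 0) * u i :=
        congrFun (hgv fun i ↦ A i 0) i
      have hgA := ih _ (by simpa only [hcol] using hlt)
        (mul_mem (relElementarySubgroup_le_principalCongruenceSubgroup _ hg) hA) rfl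
      exact (Subgroup.mul_mem_cancel_left _ hg).1 hgA

end Gamma

section Cyclotomic

open Polynomial

lemma isRelPrime_cyclotomic {m n : ℕ} (hmn : m ≠ n) :
    IsRelPrime (cyclotomic m ℤ) (cyclotomic n ℤ) := by
  obtain rfl | hm := m.eq_zero_or_pos
  · simpa using isRelPrime_one_left
  obtain rfl | hn := n.eq_zero_or_pos
  · simpa using isRelPrime_one_right
  refine (cyclotomic.irreducible hm).isRelPrime_iff_not_dvd.2 fun hdvd ↦ hmn ?_
  exact cyclotomic_injective (eq_of_monic_of_associated (cyclotomic.monic m ℤ)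
    (cyclotomic.monic n ℤ)
    ((cyclotomic.irreducible hm).associated_of_dvd (cyclotomic.irreducible hn) hdvd))

lemma iInf_span_singleton_of_isRelPrime {ι R : Type*} [CommSemiring R] [DecompositionMonoid R]
    {s : Finset ι} {p : ι → R} (hp : (s : Set ι).Pairwise (Function.onFun IsRelPrime p)) :
    ⨅ i ∈ s, Ideal.span {p i} = Ideal.span {∏ i ∈ s, p i} := by
  ext a
  simp only [Submodule.mem_iInf, Ideal.mem_span_singleton]
  exact ⟨Finset.prod_dvd_of_isRelPrime hp, fun h i hi ↦ (Finset.dvd_prod_of_mem p hi).trans h⟩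

lemma exists_cyclotomic_eq_X_sub_C_and_zetaEl_eq {e : ℕ} (he : e ∈ ({1, 2} : Finset ℕ)) :
    ∃ ε : ℤ, cyclotomic e ℤ = X - C ε ∧ zetaEl e = algebraMap ℤ (Zzeta e) ε := by
  simp only [Finset.mem_insert, Finset.mem_singleton] at he
  obtain rfl | rfl := he
  · refine ⟨1, by simp [cyclotomic_one], Subtype.ext ?_⟩
    simp [zetaEl, zeta, Complex.exp_two_pi_mul_I]
  · refine ⟨-1, by simp [cyclotomic_two], Subtype.ext ?_⟩
    have half_turn : (2 * Real.pi * Complex.I / (2 : ℕ) : ℂ) = Real.pi * Complex.I := by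
      push_cast; ring
    simp only [zetaEl, zeta, half_turn, Complex.exp_pi_mul_I]
    simp

lemma eta_eq_algebraMap_eval {e : ℕ} {ε : ℤ} (hε : zetaEl e = algebraMap ℤ (Zzeta e) ε)
    (D : Finset ℕ) :
    eta D e = algebraMap ℤ (Zzeta e) ((∏ d ∈ D.erase e, cyclotomic d ℤ).eval ε) := by
  rw [_root_.eta, ← map_prod, hε, aeval_algebraMap_apply, coe_aeval_eq_eval]

lemma map_evalRingHom_iInf_span_cyclotomic {D : Finset ℕ} {e : ℕ} {ε : ℤ}
    (hε : zetaEl e = algebraMap ℤ (Zzeta e) ε) (heta : eta D e = 3 ∨ eta D e = -3) :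
    (⨅ d ∈ D.erase e, Ideal.span {cyclotomic d ℤ}).map (evalRingHom ε) = Ideal.span {3} := by
  rw [iInf_span_singleton_of_isRelPrime fun m _ n _ ↦ isRelPrime_cyclotomic, Ideal.map_span,
    Set.image_singleton, coe_evalRingHom, Ideal.span_singleton_eq_span_singleton,
    Int.associated_iff]
  have algebraMap_injective := FaithfulSMul.algebraMap_injective ℤ (Zzeta e)
  rw [eta_eq_algebraMap_eval hε] at heta
  exact heta.imp (fun h ↦ algebraMap_injective (by simpa using h))
    fun h ↦ algebraMap_injective (by simpa using h)

end Cyclotomic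

/-- If `e ∈ D ∩ {1,2}`, `η_e = ±3`, and `O(D \ {e})` is a `GE_2`-ring, then
`O(D)` is a `GE_2`-ring. -/
theorem stmt_10 (D : Finset ℕ) (hpos : ∀ d ∈ D, 0 < d) (hcard : 2 ≤ D.card)
    (e : ℕ) (he : e ∈ D) (heS : e ∈ ({1, 2} : Finset ℕ))
    (heta : eta D e = 3 ∨ eta D e = -3)
    (hGE : IsGE (Polynomial ℤ ⧸
      (⨅ d ∈ D.erase e, Ideal.span {Polynomial.cyclotomic d ℤ})) 2) :
    IsGE (Polynomial ℤ ⧸ (⨅ d ∈ D, Ideal.span {Polynomial.cyclotomic d ℤ})) 2 := by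
  obtain ⟨ε, hΦ, hζ⟩ := exists_cyclotomic_eq_X_sub_C_and_zetaEl_eq heS
  have ideal_eq : (⨅ d ∈ D, Ideal.span {Polynomial.cyclotomic d ℤ}) =
      RingHom.ker (Polynomial.evalRingHom ε) ⊓
        ⨅ d ∈ D.erase e, Ideal.span {Polynomial.cyclotomic d ℤ} := by
    conv_lhs => rw [← Finset.insert_erase he, Finset.iInf_insert]
    rw [Polynomial.ker_evalRingHom, hΦ]
  rw [ideal_eq]
  refine IsGE.quotient_ker_inf (Polynomial.eval_surjective ε) ?_ hGE
  rw [map_evalRingHom_iInf_span_cyclotomic hζ heta]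
  exact principalCongruenceSubgroup_span_three_le
end
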